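/- Let G=(V,E) be a finite weighted graph, k ≥ 1 an integer with k+1 ≤ |V|, and 0 < ε < 1. If ρ(k+1) > (1+ε)·ρ(k), then there exists a partition of V into k nonempty sets P_1,…,P_k such that for every 1 ≤ i ≤ k: φ(G[P_i]) ≥ ε·ρ(k+1)/(14k) and φ_G(P_i) ≤ k·ρ(k). -/

import Mathlib

open Finset

/-- Weighted degree of a vertex. -/
noncomputable def deg {V : Type*} [Fintype V] (w : V → V → ℝ) (v : V) : ℝ :=
  ∑ u, w v u

/-- Volume of a set of vertices. -/
noncomputable def vol {V : Type*} [Fintype V] (w : V → V → ℝ) (S : Finset V) : ℝ :=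
  ∑ v ∈ S, deg w v

/-- Total weight of edges from `S` to `T \ S`. -/
noncomputable def eW {V : Type*} [DecidableEq V] (w : V → V → ℝ) (S T : Finset V) : ℝ :=
  ∑ u ∈ S, ∑ v ∈ T \ S, w u v

/-- Conductance of `S` in `G`. -/
noncomputable def phi {V : Type*} [Fintype V] [DecidableEq V] (w : V → V → ℝ)
    (S : Finset V) : ℝ :=
  eW w S Finset.univ / vol w S

/-- Volume of `S ⊆ P` inside the induced subgraph `G[P]`. -/
noncomputable def volIn {V : Type*} [DecidableEq V] (w : V → V → ℝ) (P S : Finset V) : ℝ :=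
  ∑ v ∈ S, ∑ u ∈ P, w v u

/-- `φ(G[P]) ≥ a` : every nonempty proper `S ⊊ P` with at most half of the induced volume
has induced conductance at least `a` (stated multiplicatively). -/
def inCondGE {V : Type*} [DecidableEq V] (w : V → V → ℝ) (P : Finset V) (a : ℝ) : Prop :=
  ∀ S : Finset V, S ⊆ P → S.Nonempty → S ≠ P →
    volIn w P S ≤ volIn w P P / 2 → a * volIn w P S ≤ eW w S P

/-- `ρ(k)`: the minimum over families of `k` pairwise disjoint nonempty subsets of the
maximum conductance. -/
noncomputable def rho {V : Type*} [Fintype V] [DecidableEq V] (w : V → V → ℝ) (k : ℕ) : ℝ :=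
  sInf { r | ∃ A : Fin k → Finset V, (∀ i, (A i).Nonempty) ∧
    (∀ i j, i ≠ j → Disjoint (A i) (A j)) ∧ r = ⨆ i, phi w (A i) }

/-- The normalized Laplacian `I - D^{-1/2} A D^{-1/2}`. -/
noncomputable def normLap {V : Type*} [Fintype V] [DecidableEq V] (w : V → V → ℝ) : Matrix V V ℝ :=
  1 - Matrix.of fun u v => w u v / (Real.sqrt (deg w u) * Real.sqrt (deg w v))

/-- `lam w k` is the `k`-th smallest eigenvalue (1-indexed) of the normalized Laplacian. -/
noncomputable def lam {V : Type*} [Fintype V] [DecidableEq V] (w : V → V → ℝ) (k : ℕ) : ℝ :=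
  if h : (normLap w).IsHermitian then
    ((Finset.univ.val.map h.eigenvalues).sort (· ≤ ·)).getD (k - 1) 0
  else 0



/-- Bilinear edge weight between two vertex sets. -/
noncomputable def ff {V : Type*} (w : V → V → ℝ) (S T : Finset V) : ℝ :=
  ∑ u ∈ S, ∑ v ∈ T, w u v

section aux
variable {V : Type*} [DecidableEq V] (w : V → V → ℝ)

lemma ff_comm (hsym : ∀ u v, w u v = w v u) (S T : Finset V) : ff w S T = ff w T S := by
  unfold ff
  rw [Finset.sum_comm]
  exact Finset.sum_congr rfl fun u _ => Finset.sum_congr rfl fun v _ => hsym _ _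

lemma ff_nonneg (h : ∀ u v, 0 ≤ w u v) (S T : Finset V) : 0 ≤ ff w S T :=
  Finset.sum_nonneg fun u _ => Finset.sum_nonneg fun v _ => h u v

lemma ff_union_left {S T : Finset V} (h : Disjoint S T) (R : Finset V) :
    ff w (S ∪ T) R = ff w S R + ff w T R := by
  unfold ff; rw [Finset.sum_union h]

lemma ff_union_right {S T : Finset V} (h : Disjoint S T) (R : Finset V) :
    ff w R (S ∪ T) = ff w R S + ff w R T := by
  unfold ff; rw [← Finset.sum_add_distrib]
  exact Finset.sum_congr rfl fun u _ => Finset.sum_union h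

lemma ff_mono_right (h : ∀ u v, 0 ≤ w u v) {S T : Finset V} (hST : S ⊆ T) (R : Finset V) :
    ff w R S ≤ ff w R T :=
  Finset.sum_le_sum fun u _ => Finset.sum_le_sum_of_subset_of_nonneg hST fun v _ _ => h u v

lemma ff_mono_left (h : ∀ u v, 0 ≤ w u v) {S T : Finset V} (hST : S ⊆ T) (R : Finset V) :
    ff w S R ≤ ff w T R :=
  Finset.sum_le_sum_of_subset_of_nonneg hST fun v _ _ => Finset.sum_nonneg fun u _ => h v u

lemma eW_eq_ff (S T : Finset V) : eW w S T = ff w S (T \ S) := rfl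

lemma volIn_eq_ff (P S : Finset V) : volIn w P S = ff w S P := rfl

variable [Fintype V]

lemma vol_eq_ff (S : Finset V) : vol w S = ff w S univ := rfl

lemma vol_pos' (hdeg : ∀ v, 0 < deg w v) {S : Finset V} (hS : S.Nonempty) : 0 < vol w S :=
  Finset.sum_pos (fun v _ => hdeg v) hS

lemma phi_nonneg (h : ∀ u v, 0 ≤ w u v) (S : Finset V) : 0 ≤ phi w S :=
  div_nonneg (ff_nonneg w h _ _) (ff_nonneg w h _ _)

lemma ff_compl_eq (hdeg : ∀ v, 0 < deg w v) {S : Finset V} (hS : S.Nonempty) :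
    ff w S (univ \ S) = phi w S * vol w S := by
  unfold phi
  rw [div_mul_cancel₀ _ (vol_pos' w hdeg hS).ne']
  rfl

lemma rho_le (h : ∀ u v, 0 ≤ w u v) {k : ℕ} (A : Fin (k+1) → Finset V) (hA : ∀ i, (A i).Nonempty)
    (hd : ∀ i j, i ≠ j → Disjoint (A i) (A j)) : ∃ i, rho w (k+1) ≤ phi w (A i) := by
  obtain ⟨i, hi⟩ := exists_eq_ciSup_of_finite (f := fun i => phi w (A i))
  refine ⟨i, ?_⟩
  replace hi : phi w (A i) = ⨆ i, phi w (A i) := hi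
  rw [hi]
  refine csInf_le ⟨0, ?_⟩ ⟨A, hA, hd, rfl⟩
  rintro r ⟨A', -, -, rfl⟩
  exact Real.iSup_nonneg fun i => phi_nonneg w h _

lemma rho_attained (k : ℕ) (hk : k ≤ Fintype.card V) :
    ∃ A : Fin k → Finset V, (∀ i, (A i).Nonempty) ∧
    (∀ i j, i ≠ j → Disjoint (A i) (A j)) ∧ ∀ i, phi w (A i) ≤ rho w k := by
  have hfin : Set.Finite { r | ∃ A : Fin k → Finset V, (∀ i, (A i).Nonempty) ∧
    (∀ i j, i ≠ j → Disjoint (A i) (A j)) ∧ r = ⨆ i, phi w (A i) } := by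
    refine (Set.finite_range (fun A : Fin k → Finset V => ⨆ i, phi w (A i))).subset ?_
    rintro r ⟨A, -, -, rfl⟩
    exact ⟨A, rfl⟩
  have hne : Set.Nonempty { r | ∃ A : Fin k → Finset V, (∀ i, (A i).Nonempty) ∧
    (∀ i j, i ≠ j → Disjoint (A i) (A j)) ∧ r = ⨆ i, phi w (A i) } := by
    have : Nonempty (Fin k ↪ V) := Function.Embedding.nonempty_of_card_le (by simpa using hk)
    obtain ⟨e⟩ := this
    refine ⟨_, fun i => {e i}, fun i => by simp, ?_, rfl⟩
    intro i j hij
    simpa using hij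
  obtain ⟨A, h1, h2, h3⟩ := hne.csInf_mem hfin
  refine ⟨A, h1, h2, fun i => ?_⟩
  have h3' : rho w k = ⨆ i, phi w (A i) := h3
  rw [h3']
  exact le_ciSup (f := fun i => phi w (A i)) (Set.finite_range _).bddAbove i

/-- Extending a family of `k` disjoint sets by one more. -/
lemma rho_cons (h : ∀ u v, 0 ≤ w u v) {k : ℕ} (A : Fin k → Finset V) (hA : ∀ i, (A i).Nonempty)
    (hd : ∀ i j, i ≠ j → Disjoint (A i) (A j)) (T : Finset V) (hT : T.Nonempty)
    (hTd : ∀ i, Disjoint T (A i)) :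
    rho w (k+1) ≤ phi w T ∨ ∃ i, rho w (k+1) ≤ phi w (A i) := by
  obtain ⟨i, hi⟩ := rho_le w h (Fin.cons T A : Fin (k+1) → Finset V)
    (fun i => by refine Fin.cases ?_ (fun j => ?_) i <;> simp [hT, hA])
    (fun i j => by
      refine Fin.cases ?_ (fun i => ?_) i <;> refine Fin.cases ?_ (fun j => ?_) j
      · simp
      · intro _; simpa using hTd j
      · intro _; simpa using (hTd i).symm
      · intro hij
        simpa using hd i j (fun e => hij (by rw [e])))
  revert hi
  refine Fin.cases ?_ (fun j => ?_) i
  · intro hi; left; simpa using hi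
  · intro hi; right; exact ⟨j, by simpa using hi⟩

/-- The core-minimal subsets. -/
lemma exists_core (A : Finset V) (hA : A.Nonempty) :
    ∃ B, B ⊆ A ∧ B.Nonempty ∧ phi w B ≤ phi w A ∧ ∀ S, S ⊆ B → S.Nonempty → phi w B ≤ phi w S := by
  obtain ⟨B, hB, hmin⟩ := Finset.exists_min_image (A.powerset.filter (·.Nonempty)) (phi w)
    ⟨A, by simp [hA]⟩
  simp only [mem_filter, mem_powerset] at hB hmin
  exact ⟨B, hB.1, hB.2, hmin A ⟨subset_rfl, hA⟩, fun S hS hne => hmin S ⟨hS.trans hB.1, hne⟩⟩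

/-- The partition maximising the internal weight among those extending the cores. -/
lemma exists_part (hsym : ∀ u v, w u v = w v u) {k : ℕ} (hk : 1 ≤ k) (B : Fin k → Finset V)
    (hd : ∀ i j, i ≠ j → Disjoint (B i) (B j)) :
    ∃ P : Fin k → Finset V, (∀ i, B i ⊆ P i) ∧ (∀ i j, i ≠ j → Disjoint (P i) (P j)) ∧
      (∀ v : V, ∃ i, v ∈ P i) ∧
      ∀ i j, i ≠ j → ∀ S, S ⊆ P i \ B i → ff w S (P j) ≤ ff w S (P i \ S) := by
  classical
  let Good : Finset (Fin k → Finset V) := univ.filter fun P =>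
    (∀ i, B i ⊆ P i) ∧ (∀ i j, i ≠ j → Disjoint (P i) (P j)) ∧ (∀ v : V, ∃ i, v ∈ P i)
  have hne : Good.Nonempty := by
    let i0 : Fin k := ⟨0, hk⟩
    let c : V → Fin k := fun v => if h : ∃ i, v ∈ B i then h.choose else i0
    refine ⟨fun i => univ.filter (fun v => c v = i), ?_⟩
    simp only [Good, mem_filter, mem_univ, true_and]
    refine ⟨?_, ?_, fun v => ⟨c v, rfl⟩⟩
    · intro i v hv
      have h : ∃ i, v ∈ B i := ⟨i, hv⟩
      simp only [mem_filter, mem_univ, true_and, c, dif_pos h]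
      by_contra hcon
      exact Finset.disjoint_left.1 (hd _ _ hcon) h.choose_spec hv
    · intro i j hij
      rw [Finset.disjoint_left]
      intro v hv hv'
      simp only [mem_filter, mem_univ, true_and] at hv hv'
      exact hij (hv.symm.trans hv')
  obtain ⟨P, hP, hmax⟩ := Finset.exists_max_image Good (fun P => ∑ i, ff w (P i) (P i)) hne
  simp only [Good, mem_filter, mem_univ, true_and] at hP hmax
  obtain ⟨hBP, hPd, hcov⟩ := hP
  refine ⟨P, hBP, hPd, hcov, ?_⟩
  intro i j hij S hS
  have hSP : S ⊆ P i := hS.trans sdiff_subset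
  have hSB : Disjoint S (B i) := Finset.disjoint_of_subset_left hS sdiff_disjoint
  let Q : Fin k → Finset V := fun l => if l = i then P i \ S else if l = j then P j ∪ S else P l
  have hQi : Q i = P i \ S := by simp [Q]
  have hQj : Q j = P j ∪ S := by simp [Q, hij.symm]
  have hQl : ∀ l, l ≠ i → l ≠ j → Q l = P l := fun l h1 h2 => by simp [Q, h1, h2]
  have hmem : ∀ l v, v ∈ Q l ↔ (v ∉ S ∧ v ∈ P l) ∨ (v ∈ S ∧ l = j) := by
    intro l v
    by_cases h1 : l = i
    · subst h1; rw [hQi]; simp [hij]; tauto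
    · by_cases h2 : l = j
      · subst h2; rw [hQj]; simp; tauto
      · rw [hQl l h1 h2]
        have : v ∈ P l → v ∉ S := fun hv hvS =>
          Finset.disjoint_left.1 (hPd _ _ h1) hv (hSP hvS)
        simp [h2]; exact this
  have hle := hmax Q ⟨?_, ?_, ?_⟩
  rotate_left
  · intro l v hv
    rw [hmem]
    left
    refine ⟨fun hvS => ?_, hBP l hv⟩
    by_cases h1 : l = i
    · subst h1; exact Finset.disjoint_left.1 hSB hvS hv
    · exact Finset.disjoint_left.1 (hPd _ _ h1) (hBP l hv) (hSP hvS)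
  · intro a b hab
    rw [Finset.disjoint_left]
    intro v hv hv'
    rw [hmem] at hv hv'
    rcases hv with ⟨h1, h2⟩ | ⟨h1, h2⟩ <;> rcases hv' with ⟨h3, h4⟩ | ⟨h3, h4⟩
    · exact Finset.disjoint_left.1 (hPd _ _ hab) h2 h4
    · exact h1 h3
    · exact h3 h1
    · exact hab (h2.trans h4.symm)
  · intro v
    by_cases hv : v ∈ S
    · exact ⟨j, (hmem _ _).2 (Or.inr ⟨hv, rfl⟩)⟩
    · obtain ⟨l, hl⟩ := hcov v
      exact ⟨l, (hmem _ _).2 (Or.inl ⟨hv, hl⟩)⟩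
  have hjm : j ∈ univ.erase i := by simp [hij.symm]
  rw [← Finset.add_sum_erase _ _ (mem_univ i), ← Finset.add_sum_erase _ _ hjm,
    ← Finset.add_sum_erase univ (fun l => ff w (P l) (P l)) (mem_univ i),
    ← Finset.add_sum_erase _ (fun l => ff w (P l) (P l)) hjm] at hle
  have hrest : ∑ l ∈ (univ.erase i).erase j, ff w (Q l) (Q l)
      = ∑ l ∈ (univ.erase i).erase j, ff w (P l) (P l) := by
    refine Finset.sum_congr rfl fun l hl => ?_
    simp only [mem_erase, mem_univ, and_true] at hl
    rw [hQl l hl.2 hl.1]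
  rw [hrest, hQi, hQj] at hle
  have hd1 : Disjoint (P i \ S) S := sdiff_disjoint
  have hd2 : Disjoint (P j) S := Finset.disjoint_of_subset_right hSP (hPd _ _ hij.symm)
  have hPi : ff w (P i) (P i) = ff w (P i \ S) (P i \ S) + ff w S S + 2 * ff w S (P i \ S) := by
    conv_lhs => rw [← Finset.sdiff_union_of_subset hSP]
    rw [ff_union_left w hd1, ff_union_right w hd1, ff_union_right w hd1,
      ff_comm w hsym (P i \ S) S]
    ring
  have hPj : ff w (P j ∪ S) (P j ∪ S) = ff w (P j) (P j) + ff w S S + 2 * ff w S (P j) := by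
    rw [ff_union_left w hd2, ff_union_right w hd2, ff_union_right w hd2,
      ff_comm w hsym (P j) S]
    ring
  linarith

/-- Sum over the other parts. -/
lemma ff_parts {k : ℕ} (P : Fin k → Finset V) (hPd : ∀ i j, i ≠ j → Disjoint (P i) (P j))
    (hcov : ∀ v : V, ∃ i, v ∈ P i) (i : Fin k) (S : Finset V) :
    ff w S (univ \ P i) = ∑ j ∈ univ.erase i, ff w S (P j) := by
  have : (univ \ P i) = (univ.erase i).biUnion P := by
    ext v
    simp only [mem_sdiff, mem_univ, true_and, mem_biUnion, mem_erase, and_true]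
    constructor
    · intro hv
      obtain ⟨j, hj⟩ := hcov v
      exact ⟨j, fun e => hv (e ▸ hj), hj⟩
    · rintro ⟨j, hji, hj⟩ hv
      exact Finset.disjoint_left.1 (hPd _ _ hji) hj hv
  rw [this]
  unfold ff
  rw [Finset.sum_comm (s := univ.erase i)]
  refine Finset.sum_congr rfl fun u _ => ?_
  rw [Finset.sum_biUnion]
  intro a _ b _ hab
  exact hPd a b hab

end aux

lemma core_arith (a b c v v' φ ρ ε : ℝ) (hε0 : 0 < ε) (hε1 : ε < 1)
    (hρ : 0 ≤ ρ) (hφρ : (1 + ε) * φ ≤ ρ) (hv : 0 ≤ v) (hvv : v ≤ v')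
    (hB : a + b = φ * (v + v')) (h1 : φ * v ≤ c + a) (h2 : φ * v' ≤ c + b)
    (h3 : ρ * v ≤ c + a ∨ ρ * v' ≤ c + b) : ρ * ε * v ≤ 4 * c := by
  have hρε : 0 ≤ ρ * ε := mul_nonneg hρ hε0.le
  have hρε1 : 0 ≤ ρ * ε * (1 - ε) := mul_nonneg hρε (by linarith)
  have key : ρ * ε ≤ 2 * (ρ - φ) := by
    refine le_of_mul_le_mul_left (?_ : (1 + ε) * (ρ * ε) ≤ (1 + ε) * (2 * (ρ - φ))) (by linarith)
    nlinarith
  have h0 : 0 ≤ ρ - φ := by linarith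
  have key2 : ρ * ε * v ≤ 2 * (ρ - φ) * v := mul_le_mul_of_nonneg_right key hv
  rcases h3 with h3 | h3
  · nlinarith
  · have : (ρ - φ) * v ≤ (ρ - φ) * v' := mul_le_mul_of_nonneg_left hvv h0
    nlinarith

lemma final_arith (k E c p v ρ ε φ g a : ℝ) (hk : 1 ≤ k) (hε0 : 0 < ε) (hε1 : ε < 1)
    (hρ : 0 ≤ ρ) (hφρ : φ ≤ ρ) (hv : 0 ≤ v) (hp : 0 ≤ p)
    (hc : ρ * ε * v ≤ 4 * c) (ha : a ≤ φ * v + c)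
    (hE1 : c + g ≤ E) (hg : 0 ≤ g) (hP : ρ * p ≤ k * (g + a)) :
    ε * ρ / (14 * k) * (v + p) ≤ E := by
  have hk0 : 0 < k := by linarith
  rw [div_mul_eq_mul_div, div_le_iff₀ (by positivity)]
  have hφv : φ * v ≤ ρ * v := mul_le_mul_of_nonneg_right hφρ hv
  have h1 : ρ * p ≤ k * (E + ρ * v) := by
    refine hP.trans (mul_le_mul_of_nonneg_left ?_ hk0.le)
    linarith
  have h2 : ρ * ε * v ≤ 4 * E := by linarith
  have hρv : 0 ≤ ρ * v := mul_nonneg hρ hv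
  have hE0 : 0 ≤ E := by
    have : 0 ≤ ρ * ε * v := by positivity
    linarith
  have h3 : ε * (ρ * p) ≤ ε * (k * (E + ρ * v)) := mul_le_mul_of_nonneg_left h1 hε0.le
  have h4 : ε * (k * E) ≤ k * E := by
    have : 0 ≤ k * E := by positivity
    nlinarith
  have h5 : k * (ρ * ε * v) ≤ k * (4 * E) := mul_le_mul_of_nonneg_left h2 hk0.le
  have h6 : ρ * ε * v ≤ k * (ρ * ε * v) := by
    have : 0 ≤ ρ * ε * v := by positivity
    nlinarith
  have h7 : 0 ≤ k * E := by positivity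
  nlinarith

/-- One-sided bound: `X` has the smaller part of the core. -/
lemma side {V : Type*} [Fintype V] [DecidableEq V] (w : V → V → ℝ)
    (hsym : ∀ u v, w u v = w v u) (hnonneg : ∀ u v, 0 ≤ w u v)
    (hdeg : ∀ v, 0 < deg w v) (k ρ ε : ℝ) (hk : 1 ≤ k) (hε0 : 0 < ε) (hε1 : ε < 1)
    (hρ : 0 ≤ ρ) (P B X Y : Finset V) (hBP : B ⊆ P) (hB : B.Nonempty)
    (hXY : Disjoint X Y) (hU : X ∪ Y = P)
    (hφρ : (1 + ε) * phi w B ≤ ρ)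
    (hmin : ∀ S, S ⊆ B → S.Nonempty → phi w B ≤ phi w S)
    (hsplit : ∀ S T, S.Nonempty → T.Nonempty → Disjoint S T → S ∪ T = B →
      ρ ≤ phi w S ∨ ρ ≤ phi w T)
    (hout : ∀ S, S ⊆ P \ B → ρ * vol w S ≤ k * ff w S (P \ S))
    (hvol : vol w (X ∩ B) ≤ vol w (Y ∩ B)) :
    ε * ρ / (14 * k) * vol w X ≤ ff w X Y := by
  set S := X ∩ B with hS
  set T := Y ∩ B with hT
  set R := X \ B with hR
  have hSB : S ⊆ B := inter_subset_right
  have hTB : T ⊆ B := inter_subset_right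
  have hXP : X ⊆ P := hU ▸ subset_union_left
  have hST : Disjoint S T := disjoint_of_subset_left inter_subset_left
    (disjoint_of_subset_right inter_subset_left hXY)
  have hSTB : S ∪ T = B := by
    rw [hS, hT, ← Finset.union_inter_distrib_right, hU]; exact inter_eq_right.2 hBP
  have hSR : Disjoint S R := by
    rw [Finset.disjoint_left]; intro v; simp [hS, hR]; tauto
  have hSRX : S ∪ R = X := by
    ext v; simp [hS, hR]; tauto
  have hφ0 := phi_nonneg w hnonneg B
  have hφρ' : phi w B ≤ ρ := by nlinarith
  -- edge decompositions
  have hsV : ∀ {S T : Finset V}, Disjoint S T → S ∪ T = B →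
      ff w S (univ \ S) = ff w S T + ff w S (univ \ B) := by
    intro S T hST hSTB
    have hd : Disjoint T (univ \ B) := by
      rw [Finset.disjoint_left]; intro v hv; simp [← hSTB, hv]
    rw [← ff_union_right w hd]
    congr 1
    ext v
    have hdj := fun h : v ∈ S => Finset.disjoint_left.1 hST h
    simp [← hSTB]; tauto
  have e1 := hsV hST hSTB
  have e2 := hsV hST.symm (by rw [union_comm]; exact hSTB)
  rw [ff_comm w hsym T S] at e2
  have e3 : ff w S (univ \ B) + ff w T (univ \ B) = phi w B * (vol w S + vol w T) := by
    rw [← ff_union_left w hST, hSTB, ff_compl_eq w hdeg hB, vol_eq_ff, vol_eq_ff, vol_eq_ff,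
      ← ff_union_left w hST, hSTB]
  have hTne : T.Nonempty := by
    by_contra hcon
    rw [Finset.not_nonempty_iff_eq_empty] at hcon
    have hSB' : S = B := by rw [← hSTB, hcon, union_empty]
    have := vol_pos' w hdeg hB
    rw [hSB', hcon] at hvol
    simp [vol] at hvol
    simp [vol] at this
    linarith
  have hv0 : 0 ≤ vol w S := ff_nonneg w hnonneg _ _
  have hp0 : 0 ≤ vol w R := ff_nonneg w hnonneg _ _
  have hc0 : 0 ≤ ff w S T := ff_nonneg w hnonneg _ _
  have h2 : phi w B * vol w T ≤ ff w S T + ff w T (univ \ B) := by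
    rw [← e2, ff_compl_eq w hdeg hTne]
    exact mul_le_mul_of_nonneg_right (hmin T hTB hTne) (ff_nonneg w hnonneg _ _)
  have hc : ρ * ε * vol w S ≤ 4 * ff w S T := by
    rcases Finset.eq_empty_or_nonempty S with hSe | hSne
    · rw [hSe]; simp [vol, ff]
    · refine core_arith (ff w S (univ \ B)) (ff w T (univ \ B)) (ff w S T) (vol w S) (vol w T)
        (phi w B) ρ ε hε0 hε1 hρ hφρ hv0 hvol e3 ?_ h2 ?_
      · rw [← e1, ff_compl_eq w hdeg hSne]
        exact mul_le_mul_of_nonneg_right (hmin S hSB hSne) (ff_nonneg w hnonneg _ _)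
      · rw [← e1, ← e2, ff_compl_eq w hdeg hTne, ff_compl_eq w hdeg hSne]
        rcases hsplit S T hSne hTne hST hSTB with h | h
        · left; exact mul_le_mul_of_nonneg_right h hv0
        · right; exact mul_le_mul_of_nonneg_right h (ff_nonneg w hnonneg _ _)
  have hvX : vol w X = vol w S + vol w R := by
    rw [vol_eq_ff, vol_eq_ff, vol_eq_ff, ← ff_union_left w hSR, hSRX]
  rw [hvX]
  refine final_arith k _ (ff w S T) (vol w R) (vol w S) ρ ε (phi w B) (ff w R Y)
    (ff w S (univ \ B)) hk hε0 hε1 hρ hφρ' hv0 hp0 hc (by linarith) ?_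
    (ff_nonneg w hnonneg _ _) ?_
  · have : ff w X Y = ff w S Y + ff w R Y := by rw [← ff_union_left w hSR, hSRX]
    have h := ff_mono_right w hnonneg (inter_subset_left : T ⊆ Y) S
    linarith
  · refine (hout R (sdiff_subset_sdiff hXP le_rfl)).trans
      (mul_le_mul_of_nonneg_left ?_ (by linarith))
    have hPR : P \ R = Y ∪ S := by
      ext v
      have hdj := fun h : v ∈ X => Finset.disjoint_left.1 hXY h
      have := @hBP v
      simp [← hU, hR, hS]; tauto
    have hYS : Disjoint Y S := disjoint_of_subset_right inter_subset_left hXY.symm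
    rw [hPR, ff_union_right w hYS, ff_comm w hsym R S]
    have : ff w S R ≤ ff w S (univ \ B) :=
      ff_mono_right w hnonneg (sdiff_subset_sdiff (subset_univ _) le_rfl) _
    linarith

theorem stmt2 {V : Type*} [Fintype V] [DecidableEq V] (w : V → V → ℝ)
    (hsym : ∀ u v, w u v = w v u) (hnonneg : ∀ u v, 0 ≤ w u v)
    (hdeg : ∀ v, 0 < deg w v) (k : ℕ) (hk : 1 ≤ k)
    (hcard : k + 1 ≤ Fintype.card V)
    (ε : ℝ) (hε0 : 0 < ε) (hε1 : ε < 1)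
    (hgap : (1 + ε) * rho w k < rho w (k + 1)) :
    ∃ P : Fin k → Finset V, (∀ i, (P i).Nonempty) ∧
      (∀ i j, i ≠ j → Disjoint (P i) (P j)) ∧
      (∀ v : V, ∃ i, v ∈ P i) ∧
      (∀ i, inCondGE w (P i) (ε * rho w (k + 1) / (14 * (k : ℝ))) ∧
        phi w (P i) ≤ (k : ℝ) * rho w k) := by
  obtain ⟨A, hA, hAd, hAρ⟩ := rho_attained w k (by omega)
  choose B hBA hB hBφ hmin using fun i => exists_core w (A i) (hA i)
  have hBd : ∀ i j, i ≠ j → Disjoint (B i) (B j) := fun i j hij =>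
    disjoint_of_subset_left (hBA i) (disjoint_of_subset_right (hBA j) (hAd i j hij))
  have hBρ : ∀ i, phi w (B i) ≤ rho w k := fun i => (hBφ i).trans (hAρ i)
  have hρk : 0 ≤ rho w k := (phi_nonneg w hnonneg _).trans (hBρ ⟨0, hk⟩)
  have hρlt : rho w k < rho w (k + 1) := by nlinarith
  have hρ : 0 ≤ rho w (k + 1) := by linarith
  have hk1 : (1 : ℝ) ≤ k := by exact_mod_cast hk
  obtain ⟨P, hBP, hPd, hcov, hmove⟩ := exists_part w hsym hk B hBd
  have hcardE : ∀ i : Fin k, (((univ.erase i).card : ℕ) : ℝ) = k - 1 := by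
    intro i
    rw [Finset.card_erase_of_mem (mem_univ i), Finset.card_univ, Fintype.card_fin]
    push_cast [hk]
    ring
  have hmoves : ∀ i S, S ⊆ P i \ B i →
      ff w S (univ \ P i) ≤ (k - 1) * ff w S (P i \ S) := by
    intro i S hS
    rw [ff_parts w P hPd hcov i S, ← hcardE i, ← nsmul_eq_mul]
    refine Finset.sum_le_card_nsmul _ _ _ fun j hj => ?_
    exact hmove i j (Finset.ne_of_mem_erase hj).symm S hS
  refine ⟨P, fun i => (hB i).mono (hBP i), hPd, hcov, fun i => ⟨?_, ?_⟩⟩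
  · have hsplit : ∀ S T, S.Nonempty → T.Nonempty → Disjoint S T → S ∪ T = B i →
        rho w (k+1) ≤ phi w S ∨ rho w (k+1) ≤ phi w T := by
      intro S T hS hT hST hU
      have hSB : S ⊆ B i := hU ▸ subset_union_left
      have hTB : T ⊆ B i := hU ▸ subset_union_right
      have hsub : ∀ j, Function.update B i T j ⊆ B j := by
        intro j
        by_cases h : j = i
        · subst h; simpa using hTB
        · simp [h]
      have c1 : ∀ j, (Function.update B i T j).Nonempty := by
        intro j
        by_cases h : j = i
        · subst h; simpa using hT
        · simpa [h] using hB j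
      have c2 : ∀ a b, a ≠ b → Disjoint (Function.update B i T a) (Function.update B i T b) := by
        intro a b hab
        exact disjoint_of_subset_left (hsub a) (disjoint_of_subset_right (hsub b) (hBd a b hab))
      have c3 : ∀ j, Disjoint S (Function.update B i T j) := by
        intro j
        by_cases h : j = i
        · subst h; simpa using hST
        · simpa [h] using disjoint_of_subset_left hSB (hBd i j (Ne.symm h))
      rcases rho_cons w hnonneg (Function.update B i T) c1 c2 S hS c3 with h | ⟨j, h⟩
      · exact Or.inl h
      · by_cases hj : j = i
        · subst hj; right; simpa using h
        · simp only [ne_eq, hj, not_false_eq_true, Function.update_of_ne] at h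
          linarith [hBρ j]
    have hout : ∀ S, S ⊆ P i \ B i → rho w (k+1) * vol w S ≤ k * ff w S (P i \ S) := by
      intro S hS
      rcases Finset.eq_empty_or_nonempty S with hSe | hSne
      · rw [hSe]; simp [vol, ff]
      have hSP : S ⊆ P i := hS.trans sdiff_subset
      have h1 : rho w (k+1) ≤ phi w S := by
        have c1 : ∀ j, Disjoint S (B j) := by
          intro j
          by_cases h : j = i
          · subst h; exact disjoint_of_subset_left hS sdiff_disjoint
          · exact disjoint_of_subset_left hSP
              (disjoint_of_subset_right (hBP j) (hPd i j (Ne.symm h)))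
        rcases rho_cons w hnonneg B hB hBd S hSne c1 with h | ⟨j, h⟩
        · exact h
        · linarith [hBρ j]
      have h2 : rho w (k+1) * vol w S ≤ ff w S (univ \ S) := by
        rw [ff_compl_eq w hdeg hSne]
        exact mul_le_mul_of_nonneg_right h1 (ff_nonneg w hnonneg _ _)
      have h3 : ff w S (univ \ S) = ff w S (P i \ S) + ff w S (univ \ P i) := by
        rw [← ff_union_right]
        · congr 1
          ext v
          have := @hSP v
          simp; tauto
        · rw [Finset.disjoint_left]; intro v; simp; tauto
      have := hmoves i S hS
      linarith
    have hφρ : (1 + ε) * phi w (B i) ≤ rho w (k+1) := by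
      have := mul_le_mul_of_nonneg_left (hBρ i) (by linarith : 0 ≤ 1 + ε)
      linarith
    have hα : 0 ≤ ε * rho w (k + 1) / (14 * (k : ℝ)) := by positivity
    intro S hSP _ _ hhalf
    rw [eW_eq_ff]
    rw [volIn_eq_ff, volIn_eq_ff] at hhalf
    rw [volIn_eq_ff]
    have hd : Disjoint S (P i \ S) := disjoint_sdiff
    have hU : S ∪ (P i \ S) = P i := Finset.union_sdiff_of_subset hSP
    rcases le_total (vol w (S ∩ B i)) (vol w ((P i \ S) ∩ B i)) with hle | hle
    · have := side w hsym hnonneg hdeg k (rho w (k+1)) ε hk1 hε0 hε1 hρ (P i) (B i) S (P i \ S)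
        (hBP i) (hB i) hd hU hφρ (hmin i) hsplit hout hle
      refine le_trans (mul_le_mul_of_nonneg_left ?_ hα) this
      exact ff_mono_right w hnonneg (subset_univ _) _
    · have := side w hsym hnonneg hdeg k (rho w (k+1)) ε hk1 hε0 hε1 hρ (P i) (B i) (P i \ S) S
        (hBP i) (hB i) hd.symm (by rw [union_comm]; exact hU) hφρ (hmin i) hsplit hout hle
      rw [ff_comm w hsym S (P i \ S)]
      refine le_trans (mul_le_mul_of_nonneg_left ?_ hα) this
      refine le_trans ?_ (ff_mono_right w hnonneg (subset_univ (P i)) _)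
      have h5 : ff w (P i) (P i) = ff w S (P i) + ff w (P i \ S) (P i) := by
        rw [← ff_union_left w hd, hU]
      linarith
  · have hPne : (P i).Nonempty := (hB i).mono (hBP i)
    have hvP := vol_pos' w hdeg hPne
    have hvBP : vol w (B i) ≤ vol w (P i) := ff_mono_left w hnonneg (hBP i) _
    unfold phi
    rw [div_le_iff₀ hvP, eW_eq_ff]
    have hd : Disjoint (B i) (P i \ B i) := disjoint_sdiff
    have hU : B i ∪ (P i \ B i) = P i := Finset.union_sdiff_of_subset (hBP i)
    have h1 : ff w (P i) (univ \ P i)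
        = ff w (B i) (univ \ P i) + ff w (P i \ B i) (univ \ P i) := by
      rw [← ff_union_left w hd, hU]
    have h2 := hmoves i (P i \ B i) subset_rfl
    rw [Finset.sdiff_sdiff_eq_self (hBP i), ff_comm w hsym (P i \ B i) (B i)] at h2
    have h3 : ff w (B i) (univ \ B i)
        = ff w (B i) (P i \ B i) + ff w (B i) (univ \ P i) := by
      rw [← ff_union_right]
      · congr 1
        ext v
        have := @hBP i v
        simp; tauto
      · rw [Finset.disjoint_left]; intro v; simp; tauto
    have h4 := ff_compl_eq w hdeg (hB i)
    have h5 : phi w (B i) * vol w (B i) ≤ rho w k * vol w (P i) :=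
      mul_le_mul (hBρ i) hvBP (ff_nonneg w hnonneg _ _) hρk
    have n1 : 0 ≤ ff w (B i) (P i \ B i) := ff_nonneg w hnonneg _ _
    have n2 : 0 ≤ ff w (B i) (univ \ P i) := ff_nonneg w hnonneg _ _
    have h6 : (k : ℝ) * ff w (B i) (univ \ B i) ≤ k * (rho w k * vol w (P i)) :=
      mul_le_mul_of_nonneg_left (by linarith) (by linarith)
    have h7 : 1 * ff w (B i) (univ \ P i) ≤ k * ff w (B i) (univ \ P i) :=
      mul_le_mul_of_nonneg_right hk1 n2
    rw [h3, mul_add] at h6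
    linarith
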